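/- For every integer k ≥ 1 and every θ ∈ [0, π], |g(θ) − g_k(θ)| ≤ J(θ)/(π (k+1)). -/

import Mathlib

open Real

/-- The step function on `[0, π]`: `1` on `(β, α)`, `1/2` at `α` and `β`, `0` elsewhere. -/
noncomputable def stepG (α β θ : ℝ) : ℝ :=
  if θ = α ∨ θ = β then 1 / 2 else if θ ∈ Set.Ioo β α then 1 else 0

/-- Fourier coefficients of the step function. -/
noncomputable def fourierC (α β : ℝ) : ℕ → ℝ
  | 0 => (α - β) / Real.pi
  | (j + 1) => (2 / Real.pi) * (Real.sin ((j + 1) * α) - Real.sin ((j + 1) * β)) / (j + 1)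

/-- The `k`-th partial sum `g_k(θ) = ∑_{j=0}^k c_j cos(jθ)`. -/
noncomputable def stepGk (α β : ℝ) (k : ℕ) (θ : ℝ) : ℝ :=
  ∑ j ∈ Finset.range (k + 1), fourierC α β j * Real.cos (j * θ)

/-- The quantity `J(θ)` controlling the pointwise Fourier error. -/
noncomputable def Jfun (α β θ : ℝ) : ℝ :=
  if θ = α then
    1 / |Real.sin α| + 1 / |Real.sin ((α + β) / 2)| + 1 / |Real.sin ((α - β) / 2)|
  else if θ = β then
    1 / |Real.sin β| + 1 / |Real.sin ((α + β) / 2)| + 1 / |Real.sin ((α - β) / 2)|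
  else
    1 / |Real.sin ((θ + α) / 2)| + 1 / |Real.sin ((θ - α) / 2)|
      + 1 / |Real.sin ((θ + β) / 2)| + 1 / |Real.sin ((θ - β) / 2)|

/-!
Up to a constant, `π g` is a signed sum of the translates by `±α`, `±β` of the sawtooth
`∑ sin (j x) / j`, and `π g_k` is the same combination of sawtooth partial sums, so the error is a
signed sum of four sawtooth errors, one for each term of `J`. The sawtooth is the imaginary part of
`-log (1 - z) = ∑ z ^ j / j` at `z = exp (i x)`. Since the geometric sums `∑ z ^ j` are bounded by
`2 / ‖1 - z‖ = 1 / |sin (x / 2)|` and the weights `1 / j` decrease, summation by parts bounds the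
tail after `k` terms by `1 / ((k + 1) |sin (x / 2)|)`. This is done inside the unit disc, where the
logarithmic series converges absolutely, and passes to the circle by continuity of both sides.
-/

/-- The jump sawtooth wave `∑ j ≥ 1, sin (j x) / j`, in closed form. Only the two periods
`|x| < 2π` around the jump at `0` are covered by the formula; they are all that is needed. -/
noncomputable def sawtooth (x : ℝ) : ℝ :=
  (π * Real.sign x - x) / 2

/-- The `k`-th partial sum of the Fourier series of `sawtooth`. The term `j = 0` is `0 / 0 = 0`. -/
noncomputable def sawtoothSum (k : ℕ) (x : ℝ) : ℝ :=
  ∑ j ∈ Finset.range (k + 1), Real.sin (j * x) / j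

theorem norm_sum_range_smul_le_of_antitone {E : Type*} [SeminormedAddCommGroup E]
    [NormedSpace ℝ E] {a : ℕ → ℝ} (ha : Antitone a) (ha₀ : ∀ i, 0 ≤ a i) {z : ℕ → E} {B : ℝ}
    (hz : ∀ n, ‖∑ i ∈ Finset.range n, z i‖ ≤ B) (n : ℕ) :
    ‖∑ i ∈ Finset.range n, a i • z i‖ ≤ a 0 * B := by
  have smul_le {c : ℝ} (hc : 0 ≤ c) (m : ℕ) :
      ‖c • ∑ i ∈ Finset.range m, z i‖ ≤ c * B := by
    rw [norm_smul, Real.norm_of_nonneg hc]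
    exact mul_le_mul_of_nonneg_left (hz m) hc
  have decrement_nonneg (i : ℕ) : 0 ≤ a i - a (i + 1) := sub_nonneg.2 (ha i.le_succ)
  calc ‖∑ i ∈ Finset.range n, a i • z i‖
      = ‖a (n - 1) • ∑ i ∈ Finset.range n, z i +
          ∑ i ∈ Finset.range (n - 1), (a i - a (i + 1)) • ∑ j ∈ Finset.range (i + 1), z j‖ := by
        rw [Finset.sum_range_by_parts, sub_eq_add_neg, ← Finset.sum_neg_distrib]
        simp only [← neg_smul, neg_sub]
    _ ≤ a (n - 1) * B + ∑ i ∈ Finset.range (n - 1), (a i - a (i + 1)) * B :=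
        norm_add_le_of_le (smul_le (ha₀ _) n)
          (norm_sum_le_of_le _ fun i _ ↦ smul_le (decrement_nonneg i) (i + 1))
    _ = a 0 * B := by
        rw [← Finset.sum_mul, Finset.sum_range_sub']
        ring

theorem norm_geom_sum_le {K : Type*} [NormedField K] {z : K} (hz : ‖z‖ ≤ 1) (hz₁ : z ≠ 1)
    (n : ℕ) : ‖∑ i ∈ Finset.range n, z ^ i‖ ≤ 2 / ‖1 - z‖ := by
  rw [geom_sum_eq hz₁, norm_div, norm_sub_rev z 1]
  gcongr
  calc ‖z ^ n - 1‖ ≤ ‖z ^ n‖ + ‖(1 : K)‖ := norm_sub_le _ _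
    _ ≤ 1 + 1 := by
        rw [norm_pow, norm_one]
        gcongr
        exact pow_le_one₀ (norm_nonneg z) hz
    _ = 2 := one_add_one_eq_two

theorem norm_sum_range_pow_div_le {z : ℂ} (hz : ‖z‖ ≤ 1) (hz₁ : z ≠ 1) (k n : ℕ) :
    ‖∑ i ∈ Finset.range n, z ^ (i + (k + 1)) / ((i + (k + 1) : ℕ) : ℂ)‖ ≤
      2 / ‖1 - z‖ / (k + 1) := by
  have weight_antitone : Antitone fun i : ℕ ↦ ((i + (k + 1) : ℕ) : ℝ)⁻¹ := fun i j hij ↦ by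
    dsimp only
    gcongr
  have norm_pow_le : ‖z ^ (k + 1)‖ ≤ 1 := by
    rw [norm_pow]
    exact pow_le_one₀ (norm_nonneg z) hz
  calc ‖∑ i ∈ Finset.range n, z ^ (i + (k + 1)) / ((i + (k + 1) : ℕ) : ℂ)‖
      = ‖z ^ (k + 1)‖ * ‖∑ i ∈ Finset.range n, ((i + (k + 1) : ℕ) : ℝ)⁻¹ • z ^ i‖ := by
        rw [← norm_mul, Finset.mul_sum]
        congr 1
        refine Finset.sum_congr rfl fun i _ ↦ ?_
        rw [Complex.real_smul, pow_add]
        push_cast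
        ring
    _ ≤ ‖∑ i ∈ Finset.range n, ((i + (k + 1) : ℕ) : ℝ)⁻¹ • z ^ i‖ :=
        mul_le_of_le_one_left (norm_nonneg _) norm_pow_le
    _ ≤ ((0 + (k + 1) : ℕ) : ℝ)⁻¹ * (2 / ‖1 - z‖) :=
        norm_sum_range_smul_le_of_antitone weight_antitone (fun i ↦ by positivity)
          (norm_geom_sum_le hz hz₁) n
    _ = 2 / ‖1 - z‖ / (k + 1) := by
        push_cast
        ring

theorem norm_neg_log_one_sub_sub_sum_le_of_norm_lt_one {z : ℂ} (hz : ‖z‖ < 1) (k : ℕ) :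
    ‖-Complex.log (1 - z) - ∑ j ∈ Finset.range (k + 1), z ^ j / j‖ ≤ 2 / ‖1 - z‖ / (k + 1) := by
  have hz₁ : z ≠ 1 := by
    rintro rfl
    simp at hz
  have tail_hasSum := (hasSum_nat_add_iff' (k + 1)).2 (Complex.hasSum_taylorSeries_neg_log hz)
  exact le_of_tendsto' tail_hasSum.tendsto_sum_nat.norm
    (norm_sum_range_pow_div_le hz.le hz₁ k)

theorem one_sub_mem_slitPlane {z : ℂ} (hz : ‖z‖ ≤ 1) (hz₁ : z ≠ 1) :
    1 - z ∈ Complex.slitPlane := by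
  rw [Complex.mem_slitPlane_iff, Complex.sub_re, Complex.one_re, Complex.sub_im, Complex.one_im]
  by_contra! h
  obtain ⟨re_le, im_eq⟩ := h
  exact hz₁ (Complex.ext (le_antisymm ((Complex.re_le_norm z).trans hz) (sub_nonpos.1 re_le))
    (sub_eq_zero.1 im_eq).symm)

theorem norm_neg_log_one_sub_sub_sum_le {z : ℂ} (hz : ‖z‖ ≤ 1) (hz₁ : z ≠ 1) (k : ℕ) :
    ‖-Complex.log (1 - z) - ∑ j ∈ Finset.range (k + 1), z ^ j / j‖ ≤ 2 / ‖1 - z‖ / (k + 1) := by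
  have hz_closure : z ∈ closure (Metric.ball (0 : ℂ) 1) := by
    rw [closure_ball 0 one_ne_zero]
    exact mem_closedBall_zero_iff.2 hz
  have hlog : ContinuousAt (fun w : ℂ ↦ Complex.log (1 - w)) z :=
    (by fun_prop : ContinuousAt (fun w : ℂ ↦ 1 - w) z).clog (one_sub_mem_slitPlane hz hz₁)
  have hnorm : ‖1 - z‖ ≠ 0 := norm_ne_zero_iff.2 (sub_ne_zero.2 hz₁.symm)
  refine ContinuousWithinAt.closure_le hz_closure (ContinuousAt.continuousWithinAt ?_)
    (ContinuousAt.continuousWithinAt ?_) fun w hw ↦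
      norm_neg_log_one_sub_sub_sum_le_of_norm_lt_one (mem_ball_zero_iff.1 hw) k
  · fun_prop
  · fun_prop (disch := assumption)

theorem one_sub_exp_mul_I (x : ℂ) :
    1 - Complex.exp (x * Complex.I) = 2 * Complex.sin (x / 2) *
      (Complex.cos ((x - π) / 2) + Complex.sin ((x - π) / 2) * Complex.I) := by
  obtain ⟨y, rfl⟩ : ∃ y, x = 2 * y := ⟨x / 2, by ring⟩
  rw [sub_div, mul_div_cancel_left₀ y two_ne_zero, Complex.cos_sub_pi_div_two,
    Complex.sin_sub_pi_div_two, Complex.exp_mul_I, Complex.cos_two_mul, Complex.sin_two_mul]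
  linear_combination (-2) * Complex.sin_sq_add_cos_sq y

theorem arg_one_sub_exp_mul_I {x : ℝ} (hx₀ : 0 < x) (hx : x < 2 * π) :
    Complex.arg (1 - Complex.exp (x * Complex.I)) = (x - π) / 2 := by
  have modulus_pos : 0 < 2 * Real.sin (x / 2) :=
    mul_pos two_pos (Real.sin_pos_of_pos_of_lt_pi (by linarith) (by linarith))
  rw [one_sub_exp_mul_I]
  exact_mod_cast Complex.arg_mul_cos_add_sin_mul_I modulus_pos
    (θ := (x - π) / 2) ⟨by linarith, by linarith⟩

theorem im_sum_exp_pow_div (k : ℕ) (x : ℝ) :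
    (∑ j ∈ Finset.range (k + 1), Complex.exp (x * Complex.I) ^ j / j).im = sawtoothSum k x := by
  rw [Complex.im_sum, sawtoothSum]
  refine Finset.sum_congr rfl fun j _ ↦ ?_
  rw [Complex.div_natCast_im, ← Complex.exp_nat_mul, ← mul_assoc, ← Complex.ofReal_natCast,
    ← Complex.ofReal_mul, Complex.exp_ofReal_mul_I_im]

theorem sawtooth_zero : sawtooth 0 = 0 := by
  simp [sawtooth]

theorem sawtooth_neg (x : ℝ) : sawtooth (-x) = -sawtooth x := by
  rw [sawtooth, sawtooth, Real.sign_neg]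
  ring

theorem sawtooth_of_pos {x : ℝ} (hx : 0 < x) : sawtooth x = (π - x) / 2 := by
  rw [sawtooth, Real.sign_of_pos hx, mul_one]

theorem sawtoothSum_zero (k : ℕ) : sawtoothSum k 0 = 0 := by
  simp [sawtoothSum]

theorem sawtoothSum_neg (k : ℕ) (x : ℝ) : sawtoothSum k (-x) = -sawtoothSum k x := by
  simp only [sawtoothSum, mul_neg, Real.sin_neg, neg_div, Finset.sum_neg_distrib]

theorem abs_sawtooth_sub_sawtoothSum_le_of_pos {x : ℝ} (hx₀ : 0 < x) (hx : x < 2 * π) (k : ℕ) :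
    |sawtooth x - sawtoothSum k x| ≤ 1 / |Real.sin (x / 2)| / (k + 1) := by
  set z := Complex.exp (x * Complex.I) with hz
  have norm_one_sub : ‖1 - z‖ = 2 * |Real.sin (x / 2)| := by
    rw [norm_sub_rev, hz, mul_comm, Complex.norm_exp_I_mul_ofReal_sub_one, norm_mul,
      Real.norm_two, Real.norm_eq_abs]
  have sin_ne_zero : |Real.sin (x / 2)| ≠ 0 :=
    abs_ne_zero.2 (Real.sin_pos_of_pos_of_lt_pi (by linarith) (by linarith)).ne'
  have z_ne_one : z ≠ 1 := by
    rintro hz₁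
    simp [hz₁, sin_ne_zero] at norm_one_sub
  calc |sawtooth x - sawtoothSum k x|
      = |(-Complex.log (1 - z) - ∑ j ∈ Finset.range (k + 1), z ^ j / j).im| := by
        rw [Complex.sub_im, Complex.neg_im, Complex.log_im, arg_one_sub_exp_mul_I hx₀ hx,
          im_sum_exp_pow_div, sawtooth_of_pos hx₀, ← neg_div, neg_sub]
    _ ≤ ‖-Complex.log (1 - z) - ∑ j ∈ Finset.range (k + 1), z ^ j / j‖ := Complex.abs_im_le_norm _
    _ ≤ 2 / ‖1 - z‖ / (k + 1) :=
        norm_neg_log_one_sub_sub_sum_le (Complex.norm_exp_ofReal_mul_I x).le z_ne_one k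
    _ = 1 / |Real.sin (x / 2)| / (k + 1) := by
        rw [norm_one_sub]
        field_simp

-- At `x = 0` both sides vanish, the right-hand one because `1 / 0 = 0`.
theorem abs_sawtooth_sub_sawtoothSum_le {x : ℝ} (hx : |x| < 2 * π) (k : ℕ) :
    |sawtooth x - sawtoothSum k x| ≤ 1 / |Real.sin (x / 2)| / (k + 1) := by
  obtain ⟨hx_lower, hx_upper⟩ := abs_lt.1 hx
  rcases lt_trichotomy x 0 with hneg | rfl | hpos
  · have reflected := abs_sawtooth_sub_sawtoothSum_le_of_pos (neg_pos.2 hneg) (by linarith) k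
    rwa [sawtooth_neg, sawtoothSum_neg, neg_div, Real.sin_neg, abs_neg, ← neg_sub', abs_neg]
      at reflected
  · simp [sawtooth_zero, sawtoothSum_zero]
  · exact abs_sawtooth_sub_sawtoothSum_le_of_pos hpos hx_upper k

theorem stepG_eq_sign_sub_sign {α β : ℝ} (hβα : β < α) (θ : ℝ) :
    stepG α β θ = (Real.sign (θ - β) - Real.sign (θ - α)) / 2 := by
  unfold stepG
  rcases lt_trichotomy θ α with hα | rfl | hα
  · rcases lt_trichotomy θ β with hβ | rfl | hβ
    · simp [Real.sign_of_neg, hα, hβ, hα.ne, hβ.ne, hβ.le]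
    · simp [Real.sign_of_neg, hα, hα.ne]
    · simp [Real.sign_of_neg, Real.sign_of_pos, hα, hβ, hα.ne, hβ.ne']
  · simp [Real.sign_of_pos, hβα]
  · simp [Real.sign_of_pos, hα, hβα.trans hα, hα.ne', (hβα.trans hα).ne', hα.le]

theorem pi_mul_stepG {α β θ : ℝ} (hβα : β < α) (hθβ : 0 < θ + β) :
    π * stepG α β θ = (α - β) + sawtooth (θ + α) - sawtooth (θ - α) - sawtooth (θ + β) +
      sawtooth (θ - β) := by
  rw [stepG_eq_sign_sub_sign hβα, sawtooth_of_pos hθβ, sawtooth_of_pos (by linarith), sawtooth,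
    sawtooth]
  ring

theorem pi_mul_fourierC_mul_cos (α β : ℝ) (j : ℕ) (θ : ℝ) :
    π * (fourierC α β j * Real.cos (j * θ)) = (if j = 0 then α - β else 0) +
      Real.sin (j * (θ + α)) / j - Real.sin (j * (θ - α)) / j -
      Real.sin (j * (θ + β)) / j + Real.sin (j * (θ - β)) / j := by
  have hπ := Real.pi_ne_zero
  rcases j with _ | j
  · simp [fourierC, mul_div_cancel₀]
  · simp only [fourierC, Nat.cast_succ, mul_add _ θ, mul_sub _ θ, Real.sin_add, Real.sin_sub,
      j.succ_ne_zero, if_false]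
    field_simp
    ring

theorem pi_mul_stepGk (α β : ℝ) (k : ℕ) (θ : ℝ) :
    π * stepGk α β k θ = (α - β) + sawtoothSum k (θ + α) - sawtoothSum k (θ - α) -
      sawtoothSum k (θ + β) + sawtoothSum k (θ - β) := by
  simp only [stepGk, sawtoothSum, Finset.mul_sum, pi_mul_fourierC_mul_cos, Finset.sum_add_distrib,
    Finset.sum_sub_distrib, Finset.sum_ite_eq', Finset.mem_range, k.succ_pos, if_true]

-- Since `1 / 0 = 0`, the generic formula also gives the values at the two jumps.
theorem Jfun_eq (α β θ : ℝ) :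
    Jfun α β θ = 1 / |Real.sin ((θ + α) / 2)| + 1 / |Real.sin ((θ - α) / 2)| +
      1 / |Real.sin ((θ + β) / 2)| + 1 / |Real.sin ((θ - β) / 2)| := by
  have sin_half_sub_comm : |Real.sin ((β - α) / 2)| = |Real.sin ((α - β) / 2)| := by
    rw [← neg_sub, neg_div, Real.sin_neg, abs_neg]
  unfold Jfun
  split_ifs with hα hβ
  · subst hα
    simp
  · subst hβ
    simp [sin_half_sub_comm, add_comm, add_assoc]
  · rfl

/-- Pointwise bound for the (undamped) Fourier partial sums of the step function:
`|g(θ) - g_k(θ)| ≤ J(θ)/(π (k+1))` for all `k ≥ 1` and `θ ∈ [0, π]`. -/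
theorem fourier_step_error_bound (α β : ℝ) (hβ : 0 < β) (hβα : β < α) (hα : α < Real.pi)
    (k : ℕ) (hk : 1 ≤ k) (θ : ℝ) (hθ : θ ∈ Set.Icc (0 : ℝ) Real.pi) :
    |stepG α β θ - stepGk α β k θ| ≤ Jfun α β θ / (Real.pi * (k + 1)) := by
  obtain ⟨hθ₀, hθπ⟩ := hθ
  let E (x : ℝ) : ℝ := sawtooth x - sawtoothSum k x
  have error_eq : π * (stepG α β θ - stepGk α β k θ) =
      E (θ + α) - E (θ - α) - E (θ + β) + E (θ - β) := by
    rw [mul_sub, pi_mul_stepG hβα (by linarith), pi_mul_stepGk]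
    ring
  have hE (x : ℝ) (hx : |x| < 2 * π) : |E x| ≤ 1 / |Real.sin (x / 2)| / (k + 1) :=
    abs_sawtooth_sub_sawtoothSum_le hx k
  rw [mul_comm π, ← div_div, le_div_iff₀' Real.pi_pos]
  calc π * |stepG α β θ - stepGk α β k θ|
      = |E (θ + α) - E (θ - α) - E (θ + β) + E (θ - β)| := by
        rw [← error_eq, abs_mul, abs_of_pos Real.pi_pos]
    _ ≤ |E (θ + α)| + |E (θ - α)| + |E (θ + β)| + |E (θ - β)| :=
        (abs_add_le _ _).trans (add_le_add_left ((abs_sub _ _).trans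
          (add_le_add_left (abs_sub _ _) _)) _)
    _ ≤ Jfun α β θ / (k + 1) := by
        rw [Jfun_eq, add_div, add_div, add_div]
        gcongr <;> exact hE _ (abs_lt.2 ⟨by linarith, by linarith⟩)
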